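/- For field operators w(f) = a(f) + a⁺(f) on the Q-Fock space, the mixed vacuum moments are given by the Q-deformed Wick formula: ⟨w(f_n)···w(f_1)Ω, Ω⟩ = Σ_{V ∈ P({1,...,n})} ∫···∫ f_n(x_n)···f_1(x_1) Π_{crossings (k,l) of V} Q(x_{a_k}, x_{a_l}) Π_{(a,z)∈V} δ(x_a − x_z) dx. In particular, ⟨w(f_n)···w(f_1)Ω,Ω⟩ = 0 whenever n is odd. -/

import Mathlib

open MeasureTheory
open scoped Classical

noncomputable section

/-- A vector in the algebraic Fock space over functions on `ℝ^j`, given by its sequence of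
`n`-particle wave functions. -/
def FockFun (j : ℕ) : Type :=
  (n : ℕ) → ((Fin n → EuclideanSpace ℝ (Fin j)) → ℝ)

/-- The `Q`-deformed creation operator (at the level of functions): `a⁺(h) f = h ⊗ f`. -/
def crOp (j : ℕ) (h : EuclideanSpace ℝ (Fin j) → ℝ) (F : FockFun j) : FockFun j :=
  fun n =>
    match n with
    | 0 => fun _ => 0
    | m + 1 => fun x => h (x 0) * F m (x ∘ Fin.succ)

/-- The `Q`-deformed annihilation operator (at the level of functions):
`(a(h) F)ₙ (x₁,…,xₙ) = ∫_U h(y) Σ_{k=0}^{n} (Π_{m<k} Q(y,x_m)) Fₙ₊₁(x₁,…,x_k,y,x_{k+1},…,xₙ) dy`,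
which is `l(h) R_Q^{(n+1)}` in the notation of the paper. -/
def anOp (j : ℕ) (U : Set (EuclideanSpace ℝ (Fin j)))
    (Q : EuclideanSpace ℝ (Fin j) → EuclideanSpace ℝ (Fin j) → ℝ)
    (h : EuclideanSpace ℝ (Fin j) → ℝ) (F : FockFun j) : FockFun j :=
  fun n x =>
    ∫ y in U, h y * ∑ k : Fin (n + 1),
      (∏ m ∈ Finset.univ.filter (fun m : Fin n => (m : ℕ) < (k : ℕ)), Q y (x m)) *
        F (n + 1) (Fin.insertNth k y x)

/-- The vacuum vector `Ω`. -/
def vac (j : ℕ) : FockFun j := fun n _ => if n = 0 then 1 else 0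

/-- The vacuum expectation `⟨F, Ω⟩_Q`, i.e. the `0`-particle component of `F`. -/
def vacExp (j : ℕ) (F : FockFun j) : ℝ := F 0 (fun i => i.elim0)

/-- `V` is a pair partition of `{0, …, n-1}`: every pair `(a, z) ∈ V` has `a < z`, and every
element belongs to exactly one pair. -/
def IsPairing (n : ℕ) (V : Finset (Fin n × Fin n)) : Prop :=
  (∀ p ∈ V, p.1 < p.2) ∧
    ∀ k : Fin n, ∃! p : Fin n × Fin n, p ∈ V ∧ (p.1 = k ∨ p.2 = k)

/-- The set of crossings of a pairing: pairs of pairs `(a,z), (a',z')` with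
`a < a' < z < z'`. -/
def crossings (n : ℕ) (V : Finset (Fin n × Fin n)) :
    Finset ((Fin n × Fin n) × (Fin n × Fin n)) :=
  (V ×ˢ V).filter (fun c => c.1.1 < c.2.1 ∧ c.2.1 < c.1.2 ∧ c.1.2 < c.2.2)

/-- The value `∫⋯∫ f_n(x_n)⋯f_1(x_1) Q_V^n(x) δ_V^n(x) dx₁⋯dxₙ` attached to a pairing `V`:
the Dirac deltas identify the two variables of each pair, leaving one integration variable
per pair, the functions of the two legs of each pair are evaluated at that variable, and each
crossing contributes a factor of `Q`. -/
def pairingIntegral (j n : ℕ) (U : Set (EuclideanSpace ℝ (Fin j)))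
    (Q : EuclideanSpace ℝ (Fin j) → EuclideanSpace ℝ (Fin j) → ℝ)
    (f : Fin n → (EuclideanSpace ℝ (Fin j) → ℝ))
    (V : Finset (Fin n × Fin n)) : ℝ :=
  ∫ x : {p // p ∈ V} → EuclideanSpace ℝ (Fin j) in {x | ∀ p, x p ∈ U},
    (∏ p : {p // p ∈ V}, f p.1.1 (x p) * f p.1.2 (x p)) *
      ∏ c ∈ (crossings n V).attach,
        Q (x ⟨c.1.1, (Finset.mem_product.mp (Finset.mem_filter.mp c.2).1).1⟩)
          (x ⟨c.1.2, (Finset.mem_product.mp (Finset.mem_filter.mp c.2).1).2⟩)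


/-- The `Q`-deformed field operator `w(h) = a(h) + a⁺(h)` at the level of functions. -/
def wOp (j : ℕ) (U : Set (EuclideanSpace ℝ (Fin j)))
    (Q : EuclideanSpace ℝ (Fin j) → EuclideanSpace ℝ (Fin j) → ℝ)
    (h : EuclideanSpace ℝ (Fin j) → ℝ) (F : FockFun j) : FockFun j :=
  fun n x => anOp j U Q h F n x + crOp j h F n x


namespace WickAux

section Analysis

variable {E : Type} [MeasureSpace E] [SigmaFinite (volume : Measure E)]

/-- Integrate out the variables labelled by `A`. -/
def marg (A : Finset ℕ) (g : (ℕ → E) → ℝ) (u : ℕ → E) : ℝ :=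
  ∫ y : (A → E), g (Function.updateFinset u A y)

theorem marg_insert (A : Finset ℕ) (s : ℕ) (hs : s ∉ A) (g : (ℕ → E) → ℝ) (u : ℕ → E)
    (hg : Integrable (fun y : (↥(insert s A) → E) =>
      g (Function.updateFinset u (insert s A) y))) :
    Integrable (fun y => marg A g (Function.update u s y)) ∧
      ∫ y, marg A g (Function.update u s y) = marg (insert s A) g u := by
  rw [Finset.insert_eq] at hg
  rw [Finset.insert_eq]
  have hd : Disjoint ({s} : Finset ℕ) A := by simpa using hs
  have mp := volume_preserving_piFinsetUnion (fun _ : ℕ => E) hd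
  have mp2 := (volume_preserving_piUnique (fun _ : ({s} : Finset ℕ) => E)).symm
  have mp3 := mp2.prod (MeasurePreserving.id (volume : Measure (A → E)))
  have mp4 := mp.comp mp3
  have hm : MeasurableEmbedding (MeasurableEquiv.piFinsetUnion (fun _ : ℕ => E) hd ∘
      Prod.map (MeasurableEquiv.piUnique (fun _ : ({s} : Finset ℕ) => E)).symm (id : (A → E) → _)) :=
    (MeasurableEquiv.measurableEmbedding _).comp
      ((MeasurableEquiv.prodCongr (MeasurableEquiv.piUnique (fun _ : ({s} : Finset ℕ) => E)).symm
        (MeasurableEquiv.refl (A → E))).measurableEmbedding)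
  have key : ∀ p : E × (A → E), g (Function.updateFinset (Function.update u s p.1) A p.2) =
      g (Function.updateFinset u ({s} ∪ A) ((MeasurableEquiv.piFinsetUnion (fun _ : ℕ => E) hd ∘
      Prod.map (MeasurableEquiv.piUnique (fun _ : ({s} : Finset ℕ) => E)).symm id) p)) := by
    intro p
    congr 1
    rw [Function.update_eq_updateFinset, Function.updateFinset_updateFinset hd]
    rfl
  have hintg := (mp4.integrable_comp_emb hm).2 hg
  have hintg' : Integrable (fun p : E × (A → E) =>
      g (Function.updateFinset (Function.update u s p.1) A p.2)) (volume.prod volume) := by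
    refine hintg.congr (Filter.Eventually.of_forall fun p => ?_)
    exact (key p).symm
  refine ⟨hintg'.integral_prod_left, ?_⟩
  have := mp4.integral_comp hm (fun y => g (Function.updateFinset u ({s} ∪ A) y))
  unfold marg
  rw [← integral_prod _ hintg', ← this]
  exact integral_congr_ae (Filter.Eventually.of_forall key)

/-- Integrand attached to a partial pairing. -/
def wt (f : ℕ → E → ℝ) (Q : E → E → ℝ) {m : ℕ} (V : Finset (ℕ × ℕ)) (L : Fin m → ℕ)
    (u : ℕ → E) : ℝ :=
  (∏ p ∈ V, f p.1 (u p.1) * f p.2 (u p.1)) * (∏ i, f (L i) (u (L i))) *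
  (∏ p ∈ V, ∏ r ∈ V, if p.1 < r.1 ∧ r.1 < p.2 ∧ p.2 < r.2 then Q (u p.1) (u r.1) else 1) *
  ∏ p ∈ V, ∏ i, if p.1 < L i ∧ L i < p.2 then Q (u p.1) (u (L i)) else 1

/-- Bounded measurable functions. -/
def BM {X : Type} [MeasurableSpace X] (g : X → ℝ) : Prop :=
  Measurable g ∧ ∃ C, ∀ u, |g u| ≤ C

theorem BM.mul {X : Type} [MeasurableSpace X] {g h : X → ℝ} (hg : BM g) (hh : BM h) :
    BM (fun u => g u * h u) := by
  obtain ⟨C, hC⟩ := hg.2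
  obtain ⟨D, hD⟩ := hh.2
  refine ⟨hg.1.mul hh.1, C * D, fun u => ?_⟩
  rw [abs_mul]
  exact mul_le_mul (hC u) (hD u) (abs_nonneg _) ((abs_nonneg _).trans (hC u))

theorem BM.const {X : Type} [MeasurableSpace X] (c : ℝ) : BM (fun _ : X => c) :=
  ⟨measurable_const, |c|, fun _ => le_rfl⟩

theorem BM.prod {X ι : Type} [MeasurableSpace X] (s : Finset ι) {g : ι → X → ℝ}
    (hg : ∀ i, BM (g i)) : BM (fun u => ∏ i ∈ s, g i u) := by
  induction s using Finset.induction_on with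
  | empty => simpa using BM.const 1
  | insert a s ha ih =>
    simp only [Finset.prod_insert ha]
    exact (hg a).mul ih

theorem BM.ite {X : Type} [MeasurableSpace X] (P : Prop) [Decidable P] {g h : X → ℝ} (hg : BM g)
    (hh : BM h) : BM (fun u => if P then g u else h u) := by
  split_ifs <;> assumption

theorem BM.comp {X Y : Type} [MeasurableSpace X] [MeasurableSpace Y] {g : X → ℝ} (hg : BM g)
    {h : Y → X} (hh : Measurable h) : BM (fun u => g (h u)) :=
  ⟨hg.1.comp hh, hg.2.imp fun _ hC _ => hC _⟩

theorem wt_integrable (f : ℕ → E → ℝ) (Q : E → E → ℝ) {m : ℕ} (V : Finset (ℕ × ℕ))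
    (L : Fin m → ℕ) (u : ℕ → E) (hf : ∀ k, BM (f k)) (hfi : ∀ k, Integrable (f k))
    (hQ : BM (fun p : E × E => Q p.1 p.2)) (hV : Set.InjOn Prod.fst (V : Set (ℕ × ℕ))) :
    Integrable (fun y : (↥(V.image Prod.fst) → E) =>
      wt f Q V L (Function.updateFinset u (V.image Prod.fst) y)) := by
  set A := V.image Prod.fst with hA
  have hQ2 : ∀ a b : ℕ, BM (fun u : ℕ → E => Q (u a) (u b)) := fun a b =>
    hQ.comp (h := fun u : ℕ → E => (u a, u b)) (by fun_prop)
  have hf2 : ∀ a b : ℕ, BM (fun u : ℕ → E => f a (u b)) := fun a b =>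
    (hf a).comp (h := fun u : ℕ → E => u b) (by fun_prop)
  have hrest : BM (fun u : ℕ → E => (∏ p ∈ V, f p.2 (u p.1)) * (∏ i, f (L i) (u (L i))) *
    (∏ p ∈ V, ∏ r ∈ V, if p.1 < r.1 ∧ r.1 < p.2 ∧ p.2 < r.2 then Q (u p.1) (u r.1) else 1) *
    ∏ p ∈ V, ∏ i, if p.1 < L i ∧ L i < p.2 then Q (u p.1) (u (L i)) else 1) := by
    refine ((BM.mul (BM.prod _ fun p => hf2 _ _) (BM.prod _ fun p => hf2 _ _)).mul
      (BM.prod _ fun p => BM.prod _ fun r => BM.ite _ (hQ2 _ _) (BM.const 1))).mul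
      (BM.prod _ fun p => BM.prod _ fun r => BM.ite _ (hQ2 _ _) (BM.const 1))
  have h1 : Integrable (fun y : (A → E) => ∏ a : A, f a (y a)) :=
    Integrable.fintype_prod (f := fun a : A => f a) (fun a => hfi a)
  have h2 := hrest.comp (measurable_updateFinset (s := A) (x := u))
  obtain ⟨C, hC⟩ := h2.2
  have h3 := h1.mul_bdd (g := _) (c := C) h2.1.aestronglyMeasurable
    (Filter.Eventually.of_forall hC)
  refine h3.congr (Filter.Eventually.of_forall fun y => ?_)
  have h4 : ∏ a : A, f a (y a) = ∏ p ∈ V, f p.1 (Function.updateFinset u A y p.1) := by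
    have h5 : ∏ a ∈ A, f a (Function.updateFinset u A y a) =
        ∏ p ∈ V, f p.1 (Function.updateFinset u A y p.1) := Finset.prod_image hV
    rw [← h5, ← Finset.prod_coe_sort A (fun a => f a (Function.updateFinset u A y a))]
    refine Fintype.prod_congr _ _ fun a => ?_
    simp [Function.updateFinset]
  simp only [wt, Finset.prod_mul_distrib, h4]
  ring

end Analysis

section Comb

/-- `V` is a partial pairing of `{0, …, t-1}` whose unpaired points are listed, in decreasing
order, by `L`. -/
structure Inv (t m : ℕ) (V : Finset (ℕ × ℕ)) (L : Fin m → ℕ) : Prop where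
  anti : StrictAnti L
  lt : ∀ i, L i < t
  pair : ∀ p ∈ V, p.1 < p.2 ∧ p.2 < t
  cover : ∀ k < t, (∃ i, L i = k) ∨ ∃ p ∈ V, p.1 = k ∨ p.2 = k
  disj : ∀ p ∈ V, ∀ i, L i ≠ p.1 ∧ L i ≠ p.2
  uniq : ∀ p ∈ V, ∀ r ∈ V, (p.1 = r.1 ∨ p.1 = r.2 ∨ p.2 = r.1 ∨ p.2 = r.2) → p = r

theorem Inv.injOn {t m : ℕ} {V : Finset (ℕ × ℕ)} {L : Fin m → ℕ} (h : Inv t m V L) :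
    Set.InjOn Prod.fst (V : Set (ℕ × ℕ)) :=
  fun p hp r hr e => h.uniq p hp r hr (Or.inl e)

theorem Inv.cr {t m : ℕ} {V : Finset (ℕ × ℕ)} {L : Fin m → ℕ} (h : Inv t m V L) :
    Inv (t + 1) (m + 1) V (Fin.cons t L) where
  anti := by
    intro a b hab
    induction b using Fin.cases with
    | zero => exact absurd hab (Fin.not_lt_zero a)
    | succ b =>
      induction a using Fin.cases with
      | zero => simpa using h.lt b
      | succ a => simpa using h.anti (by simpa using hab)
  lt := by
    intro i
    induction i using Fin.cases with
    | zero => simp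
    | succ i => simpa using (h.lt i).trans (Nat.lt_succ_self t)
  pair := fun p hp => ⟨(h.pair p hp).1, (h.pair p hp).2.trans (Nat.lt_succ_self t)⟩
  cover := by
    intro k hk
    rcases Nat.lt_succ_iff_lt_or_eq.1 hk with hk | rfl
    · rcases h.cover k hk with ⟨i, hi⟩ | h'
      · exact Or.inl ⟨i.succ, by simpa using hi⟩
      · exact Or.inr h'
    · exact Or.inl ⟨0, by simp⟩
  disj := by
    intro p hp i
    have := h.pair p hp
    induction i using Fin.cases with
    | zero => simp; omega
    | succ i => simpa using h.disj p hp i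
  uniq := h.uniq

theorem Inv.an {t m : ℕ} {V : Finset (ℕ × ℕ)} {L : Fin (m + 1) → ℕ} (h : Inv t (m + 1) V L)
    (k : Fin (m + 1)) :
    Inv (t + 1) m (insert (L k, t) V) (fun i => L (k.succAbove i)) where
  anti := fun a b hab => h.anti (Fin.strictMono_succAbove k hab)
  lt := fun i => (h.lt _).trans (Nat.lt_succ_self t)
  pair := by
    intro p hp
    rcases Finset.mem_insert.1 hp with rfl | hp
    · have := h.lt k
      simpa using this
    · have := h.pair p hp
      omega
  cover := by
    intro r hr
    rcases Nat.lt_succ_iff_lt_or_eq.1 hr with hr | rfl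
    · rcases h.cover r hr with ⟨i, hi⟩ | ⟨p, hp, hpr⟩
      · rcases Fin.eq_self_or_eq_succAbove k i with rfl | ⟨i', rfl⟩
        · exact Or.inr ⟨_, Finset.mem_insert_self _ _, Or.inl hi⟩
        · exact Or.inl ⟨i', hi⟩
      · exact Or.inr ⟨p, Finset.mem_insert_of_mem hp, hpr⟩
    · exact Or.inr ⟨_, Finset.mem_insert_self _ _, Or.inr rfl⟩
  disj := by
    intro p hp i
    rcases Finset.mem_insert.1 hp with rfl | hp
    · refine ⟨fun e => Fin.succAbove_ne k i (h.anti.injective e), ?_⟩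
      exact (h.lt _).ne
    · exact h.disj p hp _
  uniq := by
    have aux : ∀ r ∈ V, ¬ (L k = r.1 ∨ L k = r.2 ∨ t = r.1 ∨ t = r.2) := by
      intro r hr
      have h1 := h.disj r hr k
      have h2 := h.pair r hr
      omega
    intro p hp r hr hpr
    rcases Finset.mem_insert.1 hp with rfl | hp <;> rcases Finset.mem_insert.1 hr with rfl | hr
    · rfl
    · exact absurd hpr (aux r hr)
    · refine absurd ?_ (aux p hp)
      simp only at hpr
      omega
    · exact h.uniq p hp r hr hpr

variable {E : Type}

theorem wt_cr [MeasureSpace E] (f : ℕ → E → ℝ) (Q : E → E → ℝ) {t m : ℕ} {V : Finset (ℕ × ℕ)} {L : Fin m → ℕ}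
    (h : Inv t m V L) (u : ℕ → E) :
    wt f Q V (Fin.cons t L : Fin (m + 1) → ℕ) u = f t (u t) * wt f Q V L u := by
  unfold wt
  simp only [Fin.prod_univ_succ, Fin.cons_zero, Fin.cons_succ]
  have : ∀ p ∈ V, ((if p.1 < t ∧ t < p.2 then Q (u p.1) (u t) else 1) *
      ∏ i, if p.1 < L i ∧ L i < p.2 then Q (u p.1) (u (L i)) else 1) =
      ∏ i, if p.1 < L i ∧ L i < p.2 then Q (u p.1) (u (L i)) else 1 := by
    intro p hp
    have := h.pair p hp
    rw [if_neg (by omega), one_mul]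
  rw [Finset.prod_congr rfl this]
  ring

theorem wt_an [MeasureSpace E] (f : ℕ → E → ℝ) (Q : E → E → ℝ) {t m : ℕ} {V : Finset (ℕ × ℕ)}
    {L : Fin (m + 1) → ℕ} (h : Inv t (m + 1) V L) (k : Fin (m + 1)) (u : ℕ → E) :
    wt f Q (insert (L k, t) V) (fun i => L (k.succAbove i)) u =
      f t (u (L k)) * ((∏ i ∈ Finset.univ.filter (fun i : Fin m => (i : ℕ) < (k : ℕ)),
        Q (u (L k)) (u (L (k.succAbove i)))) * wt f Q V L u) := by
  have hn : (L k, t) ∉ V := fun hm => by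
    have := h.pair _ hm
    simp at this
  unfold wt
  have e1 : ∏ i ∈ Finset.univ.filter (fun i : Fin m => (i : ℕ) < (k : ℕ)),
        Q (u (L k)) (u (L (k.succAbove i))) =
      ∏ i : Fin m, if L k < L (k.succAbove i) ∧ L (k.succAbove i) < t then
        Q (u (L k)) (u (L (k.succAbove i))) else 1 := by
    rw [Finset.prod_filter]
    refine Finset.prod_congr rfl fun i _ => ?_
    have : (i : ℕ) < k ↔ L k < L (k.succAbove i) ∧ L (k.succAbove i) < t := by
      have h1 := h.lt (k.succAbove i)
      rw [h.anti.lt_iff_gt, Fin.succAbove_lt_iff_castSucc_lt, Fin.lt_def, Fin.val_castSucc]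
      tauto
    simp only [this]
  have e2 : (∏ r ∈ V, if L k < r.1 ∧ r.1 < t ∧ t < r.2 then Q (u (L k)) (u r.1) else 1) = 1 := by
    refine Finset.prod_eq_one fun r hr => ?_
    have := h.pair r hr
    rw [if_neg (by omega)]
  have e3 : (∏ p ∈ V, if p.1 < L k ∧ L k < p.2 ∧ p.2 < t then Q (u p.1) (u (L k)) else 1) =
      ∏ p ∈ V, if p.1 < L k ∧ L k < p.2 then Q (u p.1) (u (L k)) else 1 := by
    refine Finset.prod_congr rfl fun p hp => ?_
    have := h.pair p hp
    have : (p.1 < L k ∧ L k < p.2 ∧ p.2 < t) ↔ (p.1 < L k ∧ L k < p.2) := by omega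
    simp only [this]
  rw [e1]
  simp only [Finset.prod_insert hn, Fin.prod_univ_succAbove _ k, Finset.prod_mul_distrib, e2, e3,
    lt_irrefl, false_and, if_false]
  ring

/-- The finite set of partial pairings with `m` open points. -/
def St (t m : ℕ) : Finset (Finset (ℕ × ℕ) × (Fin m → ℕ)) :=
  ((Finset.range t ×ˢ Finset.range t).powerset ×ˢ
    Fintype.piFinset (fun _ : Fin m => Finset.range t)).filter (fun σ => Inv t m σ.1 σ.2)

theorem mem_St {t m : ℕ} {σ : Finset (ℕ × ℕ) × (Fin m → ℕ)} :
    σ ∈ St t m ↔ Inv t m σ.1 σ.2 := by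
  unfold St
  simp only [Finset.mem_filter, Finset.mem_product, Finset.mem_powerset, Fintype.mem_piFinset,
    Finset.mem_range, and_iff_right_iff_imp]
  intro h
  refine ⟨fun p hp => ?_, h.lt⟩
  have := h.pair p hp
  simp only [Finset.mem_product, Finset.mem_range]
  omega

/-- Transition adding a new open point. -/
def crS (t : ℕ) {m : ℕ} (σ : Finset (ℕ × ℕ) × (Fin m → ℕ)) :
    Finset (ℕ × ℕ) × (Fin (m + 1) → ℕ) := (σ.1, Fin.cons t σ.2)

/-- Transition closing the `k`-th open point. -/
def anS (t : ℕ) {m : ℕ} (k : Fin (m + 1)) (σ : Finset (ℕ × ℕ) × (Fin (m + 1) → ℕ)) :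
    Finset (ℕ × ℕ) × (Fin m → ℕ) := (insert (σ.2 k, t) σ.1, fun i => σ.2 (k.succAbove i))

theorem strictAnti_unique {m : ℕ} {L M : Fin m → ℕ} (hL : StrictAnti L) (hM : StrictAnti M)
    (h : Set.range L = Set.range M) : L = M := by
  have h1 : StrictMono (L ∘ Fin.rev) := hL.comp Fin.rev_strictAnti
  have h2 : StrictMono (M ∘ Fin.rev) := hM.comp Fin.rev_strictAnti
  have : L ∘ Fin.rev = M ∘ Fin.rev := by
    refine (StrictMono.range_inj h1 h2).1 ?_
    rw [Fin.rev_surjective.range_comp, Fin.rev_surjective.range_comp, h]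
  funext i
  simpa using congrFun this (Fin.rev i)

theorem exists_strictAnti (m : ℕ) (O : Finset ℕ) (h : O.card = m) :
    ∃ L : Fin m → ℕ, StrictAnti L ∧ Set.range L = O := by
  refine ⟨O.orderEmbOfFin h ∘ Fin.rev, (O.orderEmbOfFin h).strictMono.comp_strictAnti
    Fin.rev_strictAnti, ?_⟩
  rw [Fin.rev_surjective.range_comp, Finset.range_orderEmbOfFin]

theorem anS_surj {t m : ℕ} {τ : Finset (ℕ × ℕ) × (Fin m → ℕ)} (hτ : Inv (t + 1) m τ.1 τ.2)
    (s : ℕ) (hs : (s, t) ∈ τ.1) :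
    ∃ k, ∃ σ, Inv t (m + 1) σ.1 σ.2 ∧ anS t k σ = τ := by
  obtain ⟨V, L⟩ := τ
  simp only at hτ hs
  have hsL : s ∉ Finset.univ.image L := by
    simp only [Finset.mem_image, Finset.mem_univ, true_and, not_exists]
    exact fun i => (hτ.disj _ hs i).1
  obtain ⟨M, hM, hMr⟩ := exists_strictAnti (m + 1) (insert s (Finset.univ.image L)) (by
    rw [Finset.card_insert_of_notMem hsL, Finset.card_image_of_injective _ hτ.anti.injective]
    simp)
  have hMr' : ∀ k, (∃ i, M i = k) ↔ k = s ∨ ∃ i, L i = k := by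
    intro k
    have := Set.ext_iff.1 hMr k
    simpa using this
  obtain ⟨k, hk⟩ := (hMr' s).2 (Or.inl rfl)
  have hst := hτ.pair _ hs
  simp only at hst
  have hLt : ∀ i, L i < t := fun i => by
    have h1 := hτ.lt i
    have h2 := (hτ.disj _ hs i).2
    simp only at h2
    omega
  have hpt : ∀ p ∈ V.erase (s, t), p.1 < p.2 ∧ p.2 < t ∧ p.1 ≠ s ∧ p.2 ≠ s := by
    intro p hp
    obtain ⟨hne, hp⟩ := Finset.mem_erase.1 hp
    have h1 := hτ.pair p hp
    have h2 : ¬ (p.1 = s ∨ p.1 = t ∨ p.2 = s ∨ p.2 = t) := fun h => hne (hτ.uniq p hp _ hs h)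
    omega
  refine ⟨k, (V.erase (s, t), M), ⟨hM, ?_, ?_, ?_, ?_, ?_⟩, ?_⟩
  · intro i
    rcases (hMr' (M i)).1 ⟨i, rfl⟩ with h | ⟨i', h⟩
    · show M i < t
      omega
    · show M i < t
      rw [← h]; exact hLt i'
  · intro p hp
    have := hpt p hp
    omega
  · intro r hr
    rcases hτ.cover r (by omega) with h | ⟨p, hp, hpr⟩
    · exact Or.inl ((hMr' r).2 (Or.inr h))
    · by_cases hps : p = (s, t)
      · subst hps
        refine Or.inl ((hMr' r).2 (Or.inl ?_))
        simp only at hpr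
        omega
      · exact Or.inr ⟨p, Finset.mem_erase.2 ⟨hps, hp⟩, hpr⟩
  · intro p hp i
    have h1 := hpt p hp
    rcases (hMr' (M i)).1 ⟨i, rfl⟩ with h | ⟨i', h⟩
    · show M i ≠ _ ∧ M i ≠ _
      omega
    · show M i ≠ _ ∧ M i ≠ _
      rw [← h]; exact hτ.disj p (Finset.mem_of_mem_erase hp) i'
  · intro p hp r hr
    exact hτ.uniq p (Finset.mem_of_mem_erase hp) r (Finset.mem_of_mem_erase hr)
  · unfold anS
    simp only [hk, Finset.insert_erase hs, Prod.mk.injEq, true_and]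
    refine strictAnti_unique (fun a b hab => hM (Fin.strictMono_succAbove k hab)) hτ.anti ?_
    ext r
    simp only [Set.mem_range]
    constructor
    · rintro ⟨i, hi⟩
      rcases (hMr' r).1 ⟨_, hi⟩ with rfl | h
      · exact absurd (hM.injective (hi.trans hk.symm)) (Fin.succAbove_ne k i)
      · exact h
    · intro h
      obtain ⟨i, hi⟩ := (hMr' r).2 (Or.inr h)
      rcases Fin.eq_self_or_eq_succAbove k i with rfl | ⟨i', rfl⟩
      · exfalso
        obtain ⟨a, ha⟩ := h
        exact (hτ.disj _ hs a).1 (by simp only; omega)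
      · exact ⟨i', hi⟩

theorem anS_inj {t m : ℕ} {k k' : Fin (m + 1)} {σ σ' : Finset (ℕ × ℕ) × (Fin (m + 1) → ℕ)}
    (h : Inv t (m + 1) σ.1 σ.2) (h' : Inv t (m + 1) σ'.1 σ'.2) (e : anS t k σ = anS t k' σ') :
    k = k' ∧ σ = σ' := by
  obtain ⟨V, L⟩ := σ
  obtain ⟨V', L'⟩ := σ'
  simp only at h h'
  simp only [anS, Prod.mk.injEq] at e
  obtain ⟨e1, e2⟩ := e
  have hn : ∀ s, (s, t) ∉ V := fun s hm => by
    have := h.pair _ hm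
    simp at this
  have hn' : ∀ s, (s, t) ∉ V' := fun s hm => by
    have := h'.pair _ hm
    simp at this
  have hs : L k = L' k' := by
    have : (L k, t) ∈ insert (L' k', t) V' := e1 ▸ Finset.mem_insert_self _ _
    rcases Finset.mem_insert.1 this with h | h
    · exact congrArg Prod.fst h
    · exact absurd h (hn' _)
  have hV : V = V' := by
    rw [← Finset.erase_insert (hn (L k)), e1, hs, Finset.erase_insert (hn' _)]
  have hL : L = L' := by
    refine strictAnti_unique h.anti h'.anti ?_
    ext r
    rw [Set.mem_range, Set.mem_range, Fin.exists_iff_succAbove k,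
      Fin.exists_iff_succAbove (P := fun i => L' i = r) k', hs]
    simp only [fun i => congrFun e2 i]
  subst hL
  exact ⟨h.anti.injective hs, by rw [hV]⟩

theorem sum_St_succ {t m : ℕ} (G : Finset (ℕ × ℕ) × (Fin m → ℕ) → ℝ) :
    ∑ τ ∈ (St (t + 1) m).filter (fun τ => ∃ s, (s, t) ∈ τ.1), G τ =
      ∑ k, ∑ σ ∈ St t (m + 1), G (anS t k σ) := by
  rw [← Finset.sum_product']
  symm
  refine Finset.sum_bij (fun x _ => anS t x.1 x.2) ?_ ?_ ?_ ?_
  · intro x hx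
    simp only [Finset.mem_product, mem_St] at hx
    rw [Finset.mem_filter, mem_St]
    exact ⟨hx.2.an x.1, _, Finset.mem_insert_self _ _⟩
  · intro x hx y hy e
    simp only [Finset.mem_product, mem_St] at hx hy
    obtain ⟨h1, h2⟩ := anS_inj hx.2 hy.2 e
    exact Prod.ext h1 h2
  · intro τ hτ
    rw [Finset.mem_filter, mem_St] at hτ
    obtain ⟨s, hs⟩ := hτ.2
    obtain ⟨k, σ, h1, h2⟩ := anS_surj hτ.1 s hs
    exact ⟨(k, σ), by simpa [mem_St] using h1, h2⟩
  · intros; rfl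

theorem sum_St_zero {t : ℕ} (G : Finset (ℕ × ℕ) × (Fin 0 → ℕ) → ℝ) :
    ∑ τ ∈ (St (t + 1) 0).filter (fun τ => ¬ ∃ s, (s, t) ∈ τ.1), G τ = 0 := by
  rw [Finset.sum_eq_zero]
  intro τ hτ
  exfalso
  rw [Finset.mem_filter, mem_St] at hτ
  obtain ⟨h, hn⟩ := hτ
  rcases h.cover t (by omega) with ⟨i, _⟩ | ⟨p, hp, hpt⟩
  · exact i.elim0
  · have := h.pair p hp
    have h2 : p.2 = t := by omega
    exact hn ⟨p.1, by rw [← h2]; exact hp⟩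

theorem sum_St_cons {t m : ℕ} (G : Finset (ℕ × ℕ) × (Fin (m + 1) → ℕ) → ℝ) :
    ∑ τ ∈ (St (t + 1) (m + 1)).filter (fun τ => ¬ ∃ s, (s, t) ∈ τ.1), G τ =
      ∑ σ ∈ St t m, G (crS t σ) := by
  symm
  refine Finset.sum_bij (fun x _ => crS t x) ?_ ?_ ?_ ?_
  · intro x hx
    rw [mem_St] at hx
    rw [Finset.mem_filter, mem_St]
    refine ⟨hx.cr, ?_⟩
    rintro ⟨s, hs⟩
    have := hx.pair _ hs
    simp at this
  · intro x hx y hy e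
    simp only [crS, Prod.mk.injEq, Fin.cons_inj, true_and] at e
    exact Prod.ext e.1 e.2
  · rintro ⟨V, L⟩ hτ
    rw [Finset.mem_filter, mem_St] at hτ
    obtain ⟨h, hn⟩ := hτ
    simp only at h hn
    have hp : ∀ p ∈ V, p.1 < p.2 ∧ p.2 < t := by
      intro p hp
      have := h.pair p hp
      have h2 : p.2 ≠ t := fun e => hn ⟨p.1, by rw [← e]; exact hp⟩
      omega
    have h0 : L 0 = t := by
      rcases h.cover t (by omega) with ⟨i, hi⟩ | ⟨p, hp', hpt⟩
      · have h1 := h.lt 0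
        have h2 := h.anti.antitone (Fin.zero_le i)
        omega
      · have := hp p hp'
        omega
    have hL : L = Fin.cons t (fun i : Fin m => L i.succ) := by
      funext i
      induction i using Fin.cases with
      | zero => simp [h0]
      | succ i => simp
    refine ⟨(V, fun i => L i.succ), ?_, ?_⟩
    · rw [mem_St]
      refine ⟨fun a b hab => h.anti (by simpa using hab), ?_, hp, ?_, ?_, h.uniq⟩
      · intro i
        rw [← h0]
        exact h.anti (Fin.succ_pos i)
      · intro k hk
        rcases h.cover k (by omega) with ⟨i, hi⟩ | h'
        · induction i using Fin.cases with
          | zero => omega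
          | succ i => exact Or.inl ⟨i, hi⟩
        · exact Or.inr h'
      · exact fun p hp i => h.disj p hp i.succ
    · exact Prod.ext rfl hL.symm
  · intros; rfl

end Comb

section Fock

theorem wt_congr {E : Type} [MeasureSpace E] (f : ℕ → E → ℝ) (Q : E → E → ℝ) {m : ℕ}
    {V : Finset (ℕ × ℕ)} {L : Fin m → ℕ} {u v : ℕ → E} (h1 : ∀ p ∈ V, u p.1 = v p.1)
    (h2 : ∀ i, u (L i) = v (L i)) : wt f Q V L u = wt f Q V L v := by
  unfold wt
  simp only [h2]
  congr 1
  · congr 1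
    · congr 1
      exact Finset.prod_congr rfl fun p hp => by rw [h1 p hp]
    · refine Finset.prod_congr rfl fun p hp => Finset.prod_congr rfl fun r hr => ?_
      rw [h1 p hp, h1 r hr]
  · refine Finset.prod_congr rfl fun p hp => ?_
    rw [h1 p hp]

theorem marg_wt_congr {E : Type} [MeasureSpace E] (f : ℕ → E → ℝ) (Q : E → E → ℝ) {m : ℕ}
    {V : Finset (ℕ × ℕ)} {L : Fin m → ℕ} {u v : ℕ → E}
    (h2 : ∀ i, u (L i) = v (L i)) :
    marg (V.image Prod.fst) (wt f Q V L) u = marg (V.image Prod.fst) (wt f Q V L) v := by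
  unfold marg
  congr 1
  funext y
  refine wt_congr f Q (fun p hp => ?_) (fun i => ?_)
  · have : p.1 ∈ V.image Prod.fst := Finset.mem_image_of_mem _ hp
    simp only [Function.updateFinset, this, dif_pos]
  · simp only [Function.updateFinset, h2]

theorem marg_empty {E : Type} [MeasureSpace E] [SigmaFinite (volume : Measure E)]
    (g : (ℕ → E) → ℝ) (u : ℕ → E) : marg ∅ g u = g u := by
  unfold marg
  simp only [Function.updateFinset_empty]
  rw [volume_pi, Measure.pi_of_empty]
  simp

theorem Inv.notMem {t m : ℕ} {V : Finset (ℕ × ℕ)} {L : Fin m → ℕ} (h : Inv t m V L) (i : Fin m) :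
    L i ∉ V.image Prod.fst := by
  intro hm
  obtain ⟨p, hp, e⟩ := Finset.mem_image.1 hm
  exact (h.disj p hp i).1 e.symm

theorem updF {E : Type} {A : Finset ℕ} {a : ℕ} (h : a ∉ A) (u : ℕ → E) (y : A → E) :
    Function.updateFinset u A y a = u a := by
  simp [Function.updateFinset, h]

theorem marg_an {E : Type} [MeasureSpace E] (f : ℕ → E → ℝ) (Q : E → E → ℝ) {t m : ℕ}
    {V : Finset (ℕ × ℕ)} {L : Fin (m + 1) → ℕ} (h : Inv t (m + 1) V L) (k : Fin (m + 1))
    (u : ℕ → E) :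
    marg (V.image Prod.fst) (wt f Q (insert (L k, t) V) (fun i => L (k.succAbove i))) u =
      f t (u (L k)) * ((∏ i ∈ Finset.univ.filter (fun i : Fin m => (i : ℕ) < (k : ℕ)),
        Q (u (L k)) (u (L (k.succAbove i)))) * marg (V.image Prod.fst) (wt f Q V L) u) := by
  unfold marg
  rw [← integral_const_mul, ← integral_const_mul]
  congr 1
  funext y
  rw [wt_an f Q h k]
  simp only [updF (h.notMem _)]

theorem marg_cr {E : Type} [MeasureSpace E] (f : ℕ → E → ℝ) (Q : E → E → ℝ) {t m : ℕ}
    {V : Finset (ℕ × ℕ)} {L : Fin m → ℕ} (h : Inv t m V L)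
    (u : ℕ → E) :
    marg (V.image Prod.fst) (wt f Q V (Fin.cons t L : Fin (m + 1) → ℕ)) u =
      f t (u t) * marg (V.image Prod.fst) (wt f Q V L) u := by
  unfold marg
  rw [← integral_const_mul]
  congr 1
  funext y
  rw [wt_cr f Q h]
  have := h.cr.notMem 0
  simp only [Fin.cons_zero] at this
  rw [updF this]

/-- Explicit wave functions of `w(f_{t-1}) ⋯ w(f_0) Ω`. -/
def Phi (j : ℕ) (f : ℕ → EuclideanSpace ℝ (Fin j) → ℝ)
    (Q : EuclideanSpace ℝ (Fin j) → EuclideanSpace ℝ (Fin j) → ℝ) (t : ℕ) : FockFun j :=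
  fun m x => ∑ σ ∈ St t m, marg (σ.1.image Prod.fst) (wt f Q σ.1 σ.2) (Function.extend σ.2 x 0)

variable {j : ℕ} {f : ℕ → EuclideanSpace ℝ (Fin j) → ℝ}
    {Q Qt : EuclideanSpace ℝ (Fin j) → EuclideanSpace ℝ (Fin j) → ℝ}

theorem Phi_zero : Phi j f Q 0 = vac j := by
  funext m x
  unfold Phi vac
  cases m with
  | zero =>
    have : St 0 0 = {(∅, Fin.elim0)} := by
      ext ⟨V, L⟩
      rw [mem_St, Finset.mem_singleton]
      constructor
      · intro h
        refine Prod.ext (Finset.eq_empty_of_forall_notMem fun p hp => ?_) (funext fun i => i.elim0)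
        have := h.pair p hp
        omega
      · intro h
        obtain ⟨rfl, rfl⟩ := Prod.mk.inj h
        exact ⟨fun i => i.elim0, fun i => i.elim0, by simp, by simp, by simp, by simp⟩
    rw [this, Finset.sum_singleton]
    rw [Finset.image_empty, marg_empty]
    simp [wt]
  | succ m =>
    have : St 0 (m + 1) = ∅ := by
      refine Finset.eq_empty_of_forall_notMem fun σ hσ => ?_
      rw [mem_St] at hσ
      exact absurd (hσ.lt 0) (Nat.not_lt_zero _)
    simp [this]

theorem Phi_vanish {U : Set (EuclideanSpace ℝ (Fin j))} (hfU : ∀ k, ∀ y ∉ U, f k y = 0)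
    {t m : ℕ} {x : Fin m → EuclideanSpace ℝ (Fin j)} (i : Fin m) (hi : x i ∉ U) :
    Phi j f Q t m x = 0 := by
  unfold Phi
  refine Finset.sum_eq_zero fun σ hσ => ?_
  rw [mem_St] at hσ
  unfold marg
  rw [← integral_zero]
  congr 1
  funext y
  have : ∏ i, f (σ.2 i) (Function.updateFinset (Function.extend σ.2 x 0)
      (σ.1.image Prod.fst) y (σ.2 i)) = 0 := by
    refine Finset.prod_eq_zero (Finset.mem_univ i) ?_
    rw [updF (hσ.notMem i), hσ.anti.injective.extend_apply]
    exact hfU _ _ hi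
  unfold wt
  rw [this]
  simp

theorem Phi_step {U : Set (EuclideanSpace ℝ (Fin j))} (hU : MeasurableSet U)
    (hfU : ∀ k, ∀ y ∉ U, f k y = 0)
    (hQ : ∀ x ∈ U, ∀ y ∈ U, Qt x y = Q x y) (hf : ∀ k, BM (f k)) (hfi : ∀ k, Integrable (f k))
    (hQt : BM (fun p : EuclideanSpace ℝ (Fin j) × EuclideanSpace ℝ (Fin j) => Qt p.1 p.2))
    (t : ℕ) : wOp j U Q (f t) (Phi j f Qt t) = Phi j f Qt (t + 1) := by
  have han : ∀ (m : ℕ) (x : Fin m → EuclideanSpace ℝ (Fin j)),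
      anOp j U Q (f t) (Phi j f Qt t) m x =
      ∑ τ ∈ (St (t + 1) m).filter (fun τ => ∃ s, (s, t) ∈ τ.1),
        marg (τ.1.image Prod.fst) (wt f Qt τ.1 τ.2) (Function.extend τ.2 x 0) := by
    intro m x
    rw [sum_St_succ]
    have h1 : anOp j U Q (f t) (Phi j f Qt t) m x =
        ∫ y in U, f t y * ∑ k : Fin (m + 1),
          (∏ i ∈ Finset.univ.filter (fun i : Fin m => (i : ℕ) < (k : ℕ)), Qt y (x i)) *
            Phi j f Qt t (m + 1) (Fin.insertNth k y x) := by
      unfold anOp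
      refine setIntegral_congr_fun hU fun y hy => ?_
      congr 1
      refine Finset.sum_congr rfl fun k _ => ?_
      by_cases hx : ∀ i, x i ∈ U
      · congr 1
        exact Finset.prod_congr rfl fun i _ => (hQ y hy (x i) (hx i)).symm
      · push Not at hx
        obtain ⟨i, hi⟩ := hx
        have : Phi j f Qt t (m + 1) (Fin.insertNth k y x) = 0 :=
          Phi_vanish hfU (k.succAbove i) (by simpa using hi)
        rw [this, mul_zero, mul_zero]
    rw [h1, setIntegral_eq_integral_of_forall_compl_eq_zero
      (fun y hy => by rw [hfU t y hy, zero_mul])]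
    have h2 : ∀ y, (f t y * ∑ k : Fin (m + 1),
          (∏ i ∈ Finset.univ.filter (fun i : Fin m => (i : ℕ) < (k : ℕ)), Qt y (x i)) *
            Phi j f Qt t (m + 1) (Fin.insertNth k y x)) =
        ∑ k : Fin (m + 1), ∑ σ ∈ St t (m + 1), marg (σ.1.image Prod.fst)
          (wt f Qt (anS t k σ).1 (anS t k σ).2)
            (Function.update (Function.extend (anS t k σ).2 x 0) (σ.2 k) y) := by
      intro y
      rw [Finset.mul_sum]
      refine Finset.sum_congr rfl fun k _ => ?_
      unfold Phi
      rw [Finset.mul_sum, Finset.mul_sum]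
      refine Finset.sum_congr rfl fun σ hσ => ?_
      rw [mem_St] at hσ
      have hinj := hσ.anti.injective
      have hinj' := (hσ.an k).anti.injective
      simp only [anS]
      rw [marg_an f Qt hσ k]
      have h3 : ∀ i, Function.update (Function.extend (fun i => σ.2 (k.succAbove i)) x 0)
          (σ.2 k) y (σ.2 (k.succAbove i)) = x i := by
        intro i
        rw [Function.update_of_ne (fun e => Fin.succAbove_ne k i (hinj e))]
        exact hinj'.extend_apply x 0 i
      simp only [h3, Function.update_self]
      congr 2
      refine marg_wt_congr f Qt fun i => ?_
      rw [hinj.extend_apply]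
      rcases Fin.eq_self_or_eq_succAbove k i with rfl | ⟨i', rfl⟩
      · simp
      · rw [h3]; simp
    rw [integral_congr_ae (Filter.Eventually.of_forall h2)]
    have h4 : ∀ k : Fin (m + 1), ∀ σ ∈ St t (m + 1), _ := fun k σ hσ =>
      have hI := (mem_St.1 hσ).an k
      marg_insert (σ.1.image Prod.fst) (σ.2 k) ((mem_St.1 hσ).notMem k)
        (wt f Qt (anS t k σ).1 (anS t k σ).2) (Function.extend (anS t k σ).2 x 0)
        (by
          have := wt_integrable f Qt (insert (σ.2 k, t) σ.1) (fun i => σ.2 (k.succAbove i))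
            (Function.extend (anS t k σ).2 x 0) hf hfi hQt hI.injOn
          rw [Finset.image_insert] at this
          exact this)
    rw [integral_finsetSum _ fun k _ => integrable_finsetSum _ fun σ hσ => (h4 k σ hσ).1]
    refine Finset.sum_congr rfl fun k _ => ?_
    rw [integral_finsetSum _ fun σ hσ => (h4 k σ hσ).1]
    refine Finset.sum_congr rfl fun σ hσ => ?_
    rw [(h4 k σ hσ).2]
    simp only [anS, Finset.image_insert]
  funext m x
  have hsplit := Finset.sum_filter_add_sum_filter_not (St (t + 1) m)
    (fun τ => ∃ s, (s, t) ∈ τ.1)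
    (fun τ => marg (τ.1.image Prod.fst) (wt f Qt τ.1 τ.2) (Function.extend τ.2 x 0))
  unfold wOp
  rw [han]
  conv_rhs => unfold Phi
  rw [← hsplit]
  congr 1
  cases m with
  | zero => rw [sum_St_zero]; rfl
  | succ m =>
    rw [sum_St_cons]
    show f t (x 0) * Phi j f Qt t m (x ∘ Fin.succ) = _
    unfold Phi
    rw [Finset.mul_sum]
    refine Finset.sum_congr rfl fun σ hσ => ?_
    rw [mem_St] at hσ
    have hinj := hσ.anti.injective
    have hinj' := hσ.cr.anti.injective
    simp only [crS]
    rw [marg_cr f Qt hσ]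
    have h0 : Function.extend (Fin.cons t σ.2 : Fin (m + 1) → ℕ) x 0 t = x 0 := by
      have := hinj'.extend_apply x 0 0
      simpa using this
    rw [h0]
    congr 1
    refine marg_wt_congr f Qt fun i => ?_
    rw [hinj.extend_apply]
    have := hinj'.extend_apply x 0 i.succ
    simp only [Fin.cons_succ] at this
    rw [this]
    rfl

theorem foldl_eq_Phi {U : Set (EuclideanSpace ℝ (Fin j))}
    (h : ∀ t, wOp j U Q (f t) (Phi j f Qt t) = Phi j f Qt (t + 1)) (t : ℕ) :
    (List.ofFn (fun i : Fin t => wOp j U Q (f i))).foldl (fun F g => g F) (vac j) =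
      Phi j f Qt t := by
  induction t with
  | zero => simp [Phi_zero]
  | succ t ih =>
    rw [List.ofFn_succ', List.concat_eq_append, List.foldl_append]
    simp only [Fin.val_castSucc, Fin.val_last, List.foldl_cons, List.foldl_nil]
    rw [ih, h]

theorem foldl_odd {U : Set (EuclideanSpace ℝ (Fin j))} (t : ℕ) :
    ∀ m x, Odd (t + m) →
      (List.ofFn (fun i : Fin t => wOp j U Q (f i))).foldl (fun F g => g F) (vac j) m x = 0 := by
  induction t with
  | zero =>
    intro m x hm
    have : m ≠ 0 := by rintro rfl; simp at hm
    simp [vac, this]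
  | succ t ih =>
    intro m x hm
    rw [List.ofFn_succ', List.concat_eq_append, List.foldl_append]
    simp only [Fin.val_castSucc, Fin.val_last, List.foldl_cons, List.foldl_nil]
    unfold wOp
    have h1 : Odd (t + (m + 1)) := by convert hm using 1; ring
    have ha := fun x => ih (m + 1) x h1
    unfold wOp at ha
    unfold anOp
    unfold anOp at ha
    simp only [ha, mul_zero, Finset.sum_const_zero, integral_zero, zero_add]
    cases m with
    | zero => rfl
    | succ m =>
      have h2 : Odd (t + m) := by
        rw [Nat.odd_iff] at hm ⊢
        omega
      have hb := ih m (x ∘ Fin.succ) h2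
      unfold wOp anOp at hb
      show _ * _ = (0 : ℝ)
      rw [hb, mul_zero]

end Fock

section Final

/-- Forget the bound on the labels. -/
def emb (n : ℕ) (V : Finset (Fin n × Fin n)) : Finset (ℕ × ℕ) :=
  V.image (fun p => ((p.1 : ℕ), (p.2 : ℕ)))

theorem emb_fun_inj (n : ℕ) :
    Function.Injective (fun p : Fin n × Fin n => ((p.1 : ℕ), (p.2 : ℕ))) := by
  intro p r h
  simp only [Prod.mk.injEq] at h
  exact Prod.ext (Fin.ext h.1) (Fin.ext h.2)

theorem emb_inv {n : ℕ} {V : Finset (Fin n × Fin n)} (h : IsPairing n V) (L : Fin 0 → ℕ) :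
    Inv n 0 (emb n V) L where
  anti := fun i => i.elim0
  lt := fun i => i.elim0
  pair := by
    intro p hp
    obtain ⟨p, hp', rfl⟩ := Finset.mem_image.1 hp
    exact ⟨h.1 p hp', p.2.2⟩
  cover := by
    intro k hk
    obtain ⟨p, ⟨hp, hpk⟩, -⟩ := h.2 ⟨k, hk⟩
    refine Or.inr ⟨_, Finset.mem_image_of_mem _ hp, ?_⟩
    simpa [Fin.ext_iff] using hpk
  disj := fun _ _ i => i.elim0
  uniq := by
    intro p hp r hr e
    obtain ⟨p, hp', rfl⟩ := Finset.mem_image.1 hp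
    obtain ⟨r, hr', rfl⟩ := Finset.mem_image.1 hr
    simp only [← Fin.ext_iff] at e
    have : p = r := by
      rcases e with e | e | e | e
      · exact (h.2 p.1).unique ⟨hp', Or.inl rfl⟩ ⟨hr', Or.inl e.symm⟩
      · exact (h.2 p.1).unique ⟨hp', Or.inl rfl⟩ ⟨hr', Or.inr e.symm⟩
      · exact (h.2 p.2).unique ⟨hp', Or.inr rfl⟩ ⟨hr', Or.inl e.symm⟩
      · exact (h.2 p.2).unique ⟨hp', Or.inr rfl⟩ ⟨hr', Or.inr e.symm⟩
    rw [this]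

theorem emb_surj {n : ℕ} {W : Finset (ℕ × ℕ)} {L : Fin 0 → ℕ} (h : Inv n 0 W L) :
    ∃ V, IsPairing n V ∧ emb n V = W := by
  have hmem : ∀ p : Fin n × Fin n, p ∈ Finset.univ.filter
      (fun p : Fin n × Fin n => ((p.1 : ℕ), (p.2 : ℕ)) ∈ W) ↔ ((p.1 : ℕ), (p.2 : ℕ)) ∈ W := by
    simp
  refine ⟨Finset.univ.filter (fun p => ((p.1 : ℕ), (p.2 : ℕ)) ∈ W), ⟨?_, ?_⟩, ?_⟩
  · intro p hp
    rw [hmem] at hp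
    exact (h.pair _ hp).1
  · intro k
    rcases h.cover k k.2 with ⟨i, _⟩ | ⟨p, hp, hpk⟩
    · exact i.elim0
    · have hpp := h.pair p hp
      refine ⟨(⟨p.1, by omega⟩, ⟨p.2, by omega⟩), ⟨(hmem _).2 hp, ?_⟩, ?_⟩
      · simpa [Fin.ext_iff] using hpk
      · rintro r ⟨hr, hrk⟩
        rw [hmem] at hr
        simp only [Fin.ext_iff] at hrk
        have := h.uniq _ hr _ hp (by simp only; omega)
        apply emb_fun_inj n
        exact this
  · ext p
    simp only [emb, Finset.mem_image, hmem]
    constructor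
    · rintro ⟨r, hr, rfl⟩
      exact hr
    · intro hp
      have hpp := h.pair p hp
      exact ⟨(⟨p.1, by omega⟩, ⟨p.2, by omega⟩), hp, rfl⟩

theorem marg_eq_pairing {j n : ℕ} {U : Set (EuclideanSpace ℝ (Fin j))} (hU : MeasurableSet U)
    {Q Qt : EuclideanSpace ℝ (Fin j) → EuclideanSpace ℝ (Fin j) → ℝ}
    (hQ : ∀ x ∈ U, ∀ y ∈ U, Qt x y = Q x y)
    (f : Fin n → EuclideanSpace ℝ (Fin j) → ℝ) (fx : ℕ → EuclideanSpace ℝ (Fin j) → ℝ)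
    (hfx : ∀ i : Fin n, fx i = f i) (hfU : ∀ k, ∀ y ∉ U, fx k y = 0)
    (V : Finset (Fin n × Fin n)) (hV : IsPairing n V) (L : Fin 0 → ℕ)
    (u : ℕ → EuclideanSpace ℝ (Fin j)) :
    marg ((emb n V).image Prod.fst) (wt fx Qt (emb n V) L) u = pairingIntegral j n U Q f V := by
  set A := (emb n V).image Prod.fst with hA
  have hmemA : ∀ p ∈ V, (p.1 : ℕ) ∈ A := fun p hp =>
    Finset.mem_image_of_mem Prod.fst (Finset.mem_image_of_mem _ hp)
  let e0 : {p // p ∈ V} → A := fun p => ⟨p.1.1, hmemA p.1 p.2⟩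
  have he0 : Function.Bijective e0 := by
    constructor
    · intro p r h
      have h1 : (p.1.1 : ℕ) = r.1.1 := congrArg Subtype.val h
      exact Subtype.ext ((hV.2 p.1.1).unique ⟨p.2, Or.inl rfl⟩ ⟨r.2, Or.inl (Fin.ext h1.symm)⟩)
    · rintro ⟨a, ha⟩
      obtain ⟨p, hp, rfl⟩ := Finset.mem_image.1 ha
      obtain ⟨r, hr, rfl⟩ := Finset.mem_image.1 hp
      exact ⟨⟨r, hr⟩, rfl⟩
  let e := Equiv.ofBijective e0 he0
  have mp := volume_measurePreserving_piCongrLeft (fun _ : A => EuclideanSpace ℝ (Fin j)) e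
  unfold marg
  rw [← mp.integral_comp (MeasurableEquiv.measurableEmbedding _)]
  have hval : ∀ (x : {p // p ∈ V} → EuclideanSpace ℝ (Fin j)) (p : {p // p ∈ V}),
      Function.updateFinset u A (MeasurableEquiv.piCongrLeft
        (fun _ : A => EuclideanSpace ℝ (Fin j)) e x) p.1.1 = x p := by
    intro x p
    simp only [Function.updateFinset, hmemA p.1 p.2, dif_pos]
    exact MeasurableEquiv.piCongrLeft_apply_apply e
      (β := fun _ : A => EuclideanSpace ℝ (Fin j)) x p
  have hUm : MeasurableSet {x : {p // p ∈ V} → EuclideanSpace ℝ (Fin j) | ∀ p, x p ∈ U} := by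
    rw [Set.ofPred_forall]
    exact MeasurableSet.iInter fun p => (measurable_pi_apply p) hU
  unfold pairingIntegral
  have hstep : ∀ x : {p // p ∈ V} → EuclideanSpace ℝ (Fin j), wt fx Qt (emb n V) L
      (Function.updateFinset u A (MeasurableEquiv.piCongrLeft
        (fun _ : A => EuclideanSpace ℝ (Fin j)) e x)) =
      (∏ p : {p // p ∈ V}, f p.1.1 (x p) * f p.1.2 (x p)) *
      ∏ c ∈ (crossings n V).attach,
        Qt (x ⟨c.1.1, (Finset.mem_product.mp (Finset.mem_filter.mp c.2).1).1⟩)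
          (x ⟨c.1.2, (Finset.mem_product.mp (Finset.mem_filter.mp c.2).1).2⟩) := by
    intro x
    simp only [← hval x]
    set v := Function.updateFinset u A (MeasurableEquiv.piCongrLeft
        (fun _ : A => EuclideanSpace ℝ (Fin j)) e x) with hv
    rw [Finset.prod_coe_sort V (fun p => f p.1 (v p.1) * f p.2 (v p.1)),
      Finset.prod_attach (crossings n V) (fun c => Qt (v c.1.1) (v c.2.1)), crossings,
      Finset.prod_filter, Finset.prod_product]
    unfold wt emb
    simp only [Finset.prod_image ((emb_fun_inj n).injOn), Finset.univ_eq_empty,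
      Finset.prod_empty, Finset.prod_const_one, mul_one, hfx, Fin.lt_def]
  rw [setIntegral_congr_fun (g := fun x => wt fx Qt (emb n V) L
      (Function.updateFinset u A (MeasurableEquiv.piCongrLeft
        (fun _ : A => EuclideanSpace ℝ (Fin j)) e x))) hUm]
  · rw [setIntegral_eq_integral_of_forall_compl_eq_zero]
    intro x hx
    rw [hstep]
    simp only [Set.mem_ofPred_eq, not_forall] at hx
    obtain ⟨p, hp⟩ := hx
    rw [Finset.prod_eq_zero (Finset.mem_univ p), zero_mul]
    rw [← hfx, hfU _ _ hp, zero_mul]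
  · intro x hx
    simp only [Set.mem_ofPred_eq] at hx
    simp only
    rw [hstep]
    congr 1
    exact Finset.prod_congr rfl fun c _ => (hQ _ (hx _) _ (hx _)).symm

theorem Phi_final {j n : ℕ} {U : Set (EuclideanSpace ℝ (Fin j))} (hU : MeasurableSet U)
    {Q Qt : EuclideanSpace ℝ (Fin j) → EuclideanSpace ℝ (Fin j) → ℝ}
    (hQ : ∀ x ∈ U, ∀ y ∈ U, Qt x y = Q x y)
    (f : Fin n → EuclideanSpace ℝ (Fin j) → ℝ) (fx : ℕ → EuclideanSpace ℝ (Fin j) → ℝ)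
    (hfx : ∀ i : Fin n, fx i = f i) (hfU : ∀ k, ∀ y ∉ U, fx k y = 0)
    (x : Fin 0 → EuclideanSpace ℝ (Fin j)) :
    Phi j fx Qt n 0 x =
      ∑ V ∈ Finset.univ.filter (fun V => IsPairing n V), pairingIntegral j n U Q f V := by
  unfold Phi
  symm
  refine Finset.sum_bij (fun V _ => (emb n V, Fin.elim0)) ?_ ?_ ?_ ?_
  · intro V hV
    rw [mem_St]
    exact emb_inv (Finset.mem_filter.1 hV).2 _
  · intro V _ V' _ h
    exact Finset.image_injective (emb_fun_inj n) (congrArg Prod.fst h)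
  · rintro ⟨W, L⟩ h
    rw [mem_St] at h
    obtain ⟨V, hV, hVW⟩ := emb_surj h
    exact ⟨V, by simpa using hV, Prod.ext hVW (funext fun i => i.elim0)⟩
  · intro V hV
    exact (marg_eq_pairing hU hQ f fx hfx hfU V (Finset.mem_filter.1 hV).2 _ _).symm

end Final

end WickAux

/-- The `Q`-deformed Wick formula for the field operators (Corollary `vac` of the paper):
`⟨w(f_n) ⋯ w(f_1) Ω, Ω⟩ = Σ_{V ∈ P({1,…,n})} ∫⋯∫ f_n(x_n)⋯f_1(x_1)
Π_{crossings} Q(x_{a_k}, x_{a_l}) Π_{(a,z)∈V} δ(x_a − x_z) dx`.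
In particular the moment vanishes when `n` is odd. -/
theorem field_operator_wick_formula
    (j n : ℕ) (U : Set (EuclideanSpace ℝ (Fin j))) (hU : IsOpen U) (hUne : U.Nonempty)
    (Q : EuclideanSpace ℝ (Fin j) → EuclideanSpace ℝ (Fin j) → ℝ)
    (q : ℝ) (hq : q < 1)
    (hQc : ContinuousOn (fun p : EuclideanSpace ℝ (Fin j) × EuclideanSpace ℝ (Fin j) =>
      Q p.1 p.2) (U ×ˢ U))
    (hQs : ∀ x ∈ U, ∀ y ∈ U, Q x y = Q y x)
    (hQb : ∀ x ∈ U, ∀ y ∈ U, |Q x y| ≤ q)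
    (f : Fin n → (EuclideanSpace ℝ (Fin j) → ℝ))
    (hfc : ∀ i, Continuous (f i)) (hfs : ∀ i, HasCompactSupport (f i))
    (hfU : ∀ i, Function.support (f i) ⊆ U) :
    (vacExp j
        ((List.ofFn (fun i : Fin n => wOp j U Q (f i))).foldl (fun F g => g F) (vac j)) =
      ∑ V ∈ Finset.univ.filter (fun V => IsPairing n V), pairingIntegral j n U Q f V) ∧
    (Odd n →
      vacExp j
        ((List.ofFn (fun i : Fin n => wOp j U Q (f i))).foldl (fun F g => g F) (vac j)) = 0) := by
  classical
  let fx : ℕ → EuclideanSpace ℝ (Fin j) → ℝ := fun k => if h : k < n then f ⟨k, h⟩ else 0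
  let Qt : EuclideanSpace ℝ (Fin j) → EuclideanSpace ℝ (Fin j) → ℝ := fun x y =>
    (U ×ˢ U).indicator (fun p => Q p.1 p.2) (x, y)
  have hfx : ∀ i : Fin n, fx i = f i := fun i => by simp [fx]
  have hQt : ∀ x ∈ U, ∀ y ∈ U, Qt x y = Q x y := fun x hx y hy =>
    Set.indicator_of_mem (s := U ×ˢ U) (a := (x, y)) ⟨hx, hy⟩ _
  have hfxc : ∀ k, Continuous (fx k) := by
    intro k
    by_cases hk : k < n
    · simpa [fx, hk] using hfc ⟨k, hk⟩
    · simpa [fx, hk] using continuous_zero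
  have hfxs : ∀ k, HasCompactSupport (fx k) := by
    intro k
    by_cases hk : k < n
    · simpa [fx, hk] using hfs ⟨k, hk⟩
    · simpa [fx, hk] using HasCompactSupport.zero
  have hfxU : ∀ k, ∀ y ∉ U, fx k y = 0 := by
    intro k y hy
    by_cases hk : k < n
    · have : f ⟨k, hk⟩ y = 0 := by
        by_contra h
        exact hy (hfU _ h)
      simpa [fx, hk] using this
    · simp [fx, hk]
  have hBM : ∀ k, WickAux.BM (fx k) := fun k =>
    ⟨(hfxc k).measurable, (hfxc k).bounded_above_of_compact_support (hfxs k)⟩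
  have hintg : ∀ k, Integrable (fx k) := fun k =>
    (hfxc k).integrable_of_hasCompactSupport (hfxs k)
  have hQBM : WickAux.BM (fun p : EuclideanSpace ℝ (Fin j) × EuclideanSpace ℝ (Fin j) =>
      Qt p.1 p.2) := by
    have hm : MeasurableSet (U ×ˢ U) := hU.measurableSet.prod hU.measurableSet
    constructor
    · show Measurable ((U ×ˢ U).indicator (fun p : EuclideanSpace ℝ (Fin j) ×
        EuclideanSpace ℝ (Fin j) => Q p.1 p.2))
      rw [← Set.piecewise_eq_indicator]
      exact hQc.measurable_piecewise continuousOn_const hm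
    · refine ⟨|q|, fun p => ?_⟩
      show |(U ×ˢ U).indicator (fun p : EuclideanSpace ℝ (Fin j) ×
        EuclideanSpace ℝ (Fin j) => Q p.1 p.2) p| ≤ _
      by_cases hp : p ∈ U ×ˢ U
      · rw [Set.indicator_of_mem hp]
        exact (hQb _ hp.1 _ hp.2).trans (le_abs_self q)
      · rw [Set.indicator_of_notMem hp]
        simp
  have hstep := WickAux.Phi_step (Q := Q) hU.measurableSet hfxU hQt hBM hintg hQBM
  have hfold := WickAux.foldl_eq_Phi hstep n
  have hodd := WickAux.foldl_odd (j := j) (f := fx) (Q := Q) (U := U) n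
  simp only [hfx] at hfold hodd
  refine ⟨?_, fun hn => hodd 0 _ (by simpa using hn)⟩
  rw [hfold]
  exact WickAux.Phi_final hU.measurableSet hQt f fx hfx hfxU _

end
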